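/- Every metric space (X, d) with at most 4 points embeds isometrically into ℝ³ equipped with the ℓ1-norm; that is, there exists a map φ : X → ℝ³ such that ‖φ(x) − φ(y)‖₁ = d(x,y) for all x, y ∈ X. -/

import Mathlib

/-!
Four points `a, b, c, e`, labelled so that `d(a,b) + d(c,e)` is the largest of the three sums over
the pairings, already embed into the `ℓ1`-plane; the third coordinate is constantly `0`. The metric
is a nonnegative combination of six cuts. The four singletons have as weights the Gromov products
`wa = (c|e)_a`, `wb = (c|e)_b`, `wc = (a|b)_c`, `we = (a|b)_e`, which are nonnegative by the
triangle inequality. The cuts `{a,c} | {b,e}` and `{b,c} | {a,e}` have as weights half the excess of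
the largest sum over the sums of the other pairings, `s` and `t` respectively. The six cuts split
into the two chains
`{a} ⊂ {a,c} ⊂ {a,c,e}` and `{c} ⊂ {b,c} ⊂ {a,b,c}`, and each chain of cuts is realised on a line.

Spaces with fewer points are covered by listing points with repetition, since `d(x,y) > 0` for
`x ≠ y` is never used.
-/

/-- The embedding for a list of four points exhausting `X`, possibly with repetitions, in which
the pairing `{p 0, p 1}, {p 2, p 3}` has the largest sum. -/
theorem exists_l1_embedding_of_max_pairing {X : Type*} [MetricSpace X] (p : Fin 4 → X)
    (hp : Function.Surjective p)
    (h₁ : dist (p 0) (p 2) + dist (p 1) (p 3) ≤ dist (p 0) (p 1) + dist (p 2) (p 3))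
    (h₂ : dist (p 0) (p 3) + dist (p 1) (p 2) ≤ dist (p 0) (p 1) + dist (p 2) (p 3)) :
    ∃ φ : X → (Fin 3 → ℝ),
      ∀ x y : X, (∑ i : Fin 3, |φ x i - φ y i|) = dist x y := by
  suffices H : ∃ f : Fin 4 → Fin 3 → ℝ,
      ∀ i j, (∑ k : Fin 3, |f i k - f j k|) = dist (p i) (p j) by
    obtain ⟨f, hf⟩ := H
    refine ⟨fun x => f (Function.surjInv hp x), fun x y => ?_⟩
    rw [hf, Function.surjInv_eq hp, Function.surjInv_eq hp]
  obtain ⟨wa, hwa⟩ : ∃ w, w = (dist (p 0) (p 2) + dist (p 0) (p 3) - dist (p 2) (p 3)) / 2 :=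
    ⟨_, rfl⟩
  obtain ⟨wb, hwb⟩ : ∃ w, w = (dist (p 1) (p 2) + dist (p 1) (p 3) - dist (p 2) (p 3)) / 2 :=
    ⟨_, rfl⟩
  obtain ⟨wc, hwc⟩ : ∃ w, w = (dist (p 0) (p 2) + dist (p 1) (p 2) - dist (p 0) (p 1)) / 2 :=
    ⟨_, rfl⟩
  obtain ⟨we, hwe⟩ : ∃ w, w = (dist (p 0) (p 3) + dist (p 1) (p 3) - dist (p 0) (p 1)) / 2 :=
    ⟨_, rfl⟩
  obtain ⟨s, hs⟩ : ∃ w, w = (dist (p 0) (p 1) + dist (p 2) (p 3)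
      - (dist (p 0) (p 2) + dist (p 1) (p 3))) / 2 := ⟨_, rfl⟩
  obtain ⟨t, ht⟩ : ∃ w, w = (dist (p 0) (p 1) + dist (p 2) (p 3)
      - (dist (p 0) (p 3) + dist (p 1) (p 2))) / 2 := ⟨_, rfl⟩
  have ha0 : 0 ≤ wa := by linarith [dist_triangle_left (p 2) (p 3) (p 0)]
  have hb0 : 0 ≤ wb := by linarith [dist_triangle_left (p 2) (p 3) (p 1)]
  have hc0 : 0 ≤ wc := by linarith [dist_triangle_right (p 0) (p 1) (p 2)]
  have he0 : 0 ≤ we := by linarith [dist_triangle_right (p 0) (p 1) (p 3)]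
  have hs0 : 0 ≤ s := by linarith
  have ht0 : 0 ≤ t := by linarith
  refine ⟨![![0, wc + t, 0], ![wa + s + wb, wc, 0], ![wa, 0, 0], ![wa + s, wc + t + we, 0]], ?_⟩
  have h01 : |0 - (wa + s + wb)| + |wc + t - wc| = dist (p 0) (p 1) := by
    rw [abs_of_nonpos (by linarith), abs_of_nonneg (by linarith)]; linarith
  have h02 : |0 - wa| + |wc + t - 0| = dist (p 0) (p 2) := by
    rw [abs_of_nonpos (by linarith), abs_of_nonneg (by linarith)]; linarith
  have h03 : |0 - (wa + s)| + |wc + t - (wc + t + we)| = dist (p 0) (p 3) := by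
    rw [abs_of_nonpos (by linarith), abs_of_nonpos (by linarith)]; linarith
  have h12 : |wa + s + wb - wa| + |wc - 0| = dist (p 1) (p 2) := by
    rw [abs_of_nonneg (by linarith), abs_of_nonneg (by linarith)]; linarith
  have h13 : |wa + s + wb - (wa + s)| + |wc - (wc + t + we)| = dist (p 1) (p 3) := by
    rw [abs_of_nonneg (by linarith), abs_of_nonpos (by linarith)]; linarith
  have h23 : |wa - (wa + s)| + |0 - (wc + t + we)| = dist (p 2) (p 3) := by
    rw [abs_of_nonpos (by linarith), abs_of_nonpos (by linarith)]; linarith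
  -- It suffices to treat `i < j`, the diagonal being trivial and both sides symmetric.
  have hsymm : ∀ f : Fin 4 → Fin 3 → ℝ,
      (∀ i j, i < j → (∑ k : Fin 3, |f i k - f j k|) = dist (p i) (p j)) →
      ∀ i j, (∑ k : Fin 3, |f i k - f j k|) = dist (p i) (p j) := by
    intro f hf i j
    rcases lt_trichotomy i j with hij | rfl | hij
    · exact hf i j hij
    · simp
    · rw [dist_comm, ← hf j i hij]
      exact Finset.sum_congr rfl fun k _ => abs_sub_comm _ _
  refine hsymm _ fun i j hij => ?_
  rw [Fin.sum_univ_three]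
  fin_cases i <;> fin_cases j <;> first
    | exact absurd hij (by decide)
    | (change _ + _ + |(0 : ℝ) - 0| = _
       rw [sub_self, abs_zero, add_zero]
       first | exact h01 | exact h02 | exact h03 | exact h12 | exact h13 | exact h23)

/-- Every metric space with at most 4 points embeds isometrically into `ℝ³` with the
`ℓ1`-norm: there is `φ : X → ℝ³` with `‖φ x - φ y‖₁ = dist x y` for all `x, y`. -/
theorem four_point_metric_embeds_into_l1_R3
    {X : Type*} [MetricSpace X] [Fintype X] (h : Fintype.card X ≤ 4) :
    ∃ φ : X → (Fin 3 → ℝ),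
      ∀ x y : X, (∑ i : Fin 3, |φ x i - φ y i|) = dist x y := by
  rcases isEmpty_or_nonempty X with hX | hX
  · exact ⟨fun _ => 0, fun x => hX.elim x⟩
  obtain ⟨g⟩ : Nonempty (X ↪ Fin 4) :=
    Function.Embedding.nonempty_of_card_le (by simpa using h)
  obtain ⟨p, hp⟩ : ∃ p : Fin 4 → X, Function.Surjective p :=
    ⟨Function.invFun g, Function.invFun_surjective g.injective⟩
  -- Swapping `p 1` with `p 2` or with `p 3` turns any pairing of largest sum into `{0,1}, {2,3}`.
  have perm : ∀ σ : Equiv.Perm (Fin 4), Function.Surjective (p ∘ σ) :=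
    fun σ => hp.comp σ.surjective
  rcases le_total (dist (p 0) (p 2) + dist (p 1) (p 3)) (dist (p 0) (p 1) + dist (p 2) (p 3))
    with h12 | h12 <;>
  rcases le_total (dist (p 0) (p 3) + dist (p 1) (p 2)) (dist (p 0) (p 1) + dist (p 2) (p 3))
    with h13 | h13 <;>
  rcases le_total (dist (p 0) (p 3) + dist (p 1) (p 2)) (dist (p 0) (p 2) + dist (p 1) (p 3))
    with h23 | h23 <;> first
    | exact exists_l1_embedding_of_max_pairing p hp (by linarith) (by linarith)
    | (refine exists_l1_embedding_of_max_pairing _ (perm (Equiv.swap 1 2)) ?_ ?_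
       · change dist (p 0) (p 1) + dist (p 2) (p 3) ≤ dist (p 0) (p 2) + dist (p 1) (p 3)
         linarith
       · change dist (p 0) (p 3) + dist (p 2) (p 1) ≤ dist (p 0) (p 2) + dist (p 1) (p 3)
         linarith [dist_comm (p 1) (p 2)])
    | (refine exists_l1_embedding_of_max_pairing _ (perm (Equiv.swap 1 3)) ?_ ?_
       · change dist (p 0) (p 2) + dist (p 3) (p 1) ≤ dist (p 0) (p 3) + dist (p 2) (p 1)
         linarith [dist_comm (p 1) (p 2), dist_comm (p 1) (p 3)]
       · change dist (p 0) (p 1) + dist (p 3) (p 2) ≤ dist (p 0) (p 3) + dist (p 2) (p 1)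
         linarith [dist_comm (p 1) (p 2), dist_comm (p 2) (p 3)])
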